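/- Let U : ℝ² → ℝ be a smooth, nowhere-vanishing function of (z,τ) satisfying the RmKdV equation U_τ + (U³(U_zz − U))_z = 0, let Λ ∈ ℝ, and let (Ψ₁,Ψ₂) be smooth real functions on ℝ² satisfying the RmKdV Lax pair Ψ_z = B·Ψ, Ψ_τ = Λ·C·Ψ with B = [[−1, Λ/U],[Λ/U, 1]] and C = [[4ΛU, U·U_zz + U_z² − 2U·U_z − 4Λ²],[U·U_zz + U_z² + 2U·U_z − 4Λ², −4ΛU]]. Fix i ∈ {1,2} and set k = −1 if i = 1 and k = +1 if i = 2; suppose U + k·U_z is nowhere vanishing. Let y : ℝ² → ℝ be smooth with y_z = U + k·U_z and y_τ = (U⁴ − U³·U_zz) + k·(U⁴ − U³·U_zz)_z, let M be a smooth function of (y,T) with M(y(z,τ), τ) = U·(U + k·U_z)(z,τ), and let Φ be a smooth function of (y,T) with Φ(y(z,τ), τ) = Ψ_i(z,τ) for all (z,τ). Then, with λ = −Λ², at every point of the form (y(z,τ), τ) the function Φ satisfies the scalar RKdV Lax pair: Φ_yy = −(M_y/M)Φ_y + ((M − λ)/M²)Φ and Φ_T = (M²·M_yy + M·M_y² −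 M² + 4λM)Φ_y − M·M_y·Φ. -/

import Mathlib

noncomputable section

/-- Partial derivative of `f` with respect to its first argument. -/
def d1 (f : ℝ → ℝ → ℝ) : ℝ → ℝ → ℝ := fun a b => deriv (fun a' => f a' b) a

/-- Partial derivative of `f` with respect to its second argument. -/
def d2 (f : ℝ → ℝ → ℝ) : ℝ → ℝ → ℝ := fun a b => deriv (fun b' => f a b') b

/-- Smoothness of a two-variable real function. -/
def Smooth2 (f : ℝ → ℝ → ℝ) : Prop := ContDiff ℝ (⊤ : ℕ∞) (fun p : ℝ × ℝ => f p.1 p.2)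

/-- A smooth function of two variables has its first partial derivative. -/
lemma Smooth2.hasD1 {f : ℝ → ℝ → ℝ} (hf : Smooth2 f) (a b : ℝ) :
    HasDerivAt (fun a' => f a' b) (d1 f a b) a := by
  have h : Differentiable ℝ (fun p : ℝ × ℝ => f p.1 p.2) := hf.differentiable (by simp)
  have h2 : Differentiable ℝ (fun a' : ℝ => f a' b) :=
    h.comp (g := fun p : ℝ × ℝ => f p.1 p.2) (f := fun a' : ℝ => (a', b)) (by fun_prop)
  exact (h2 a).hasDerivAt

lemma Smooth2.hasF {f : ℝ → ℝ → ℝ} (hf : Smooth2 f) (a b : ℝ) :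
    HasFDerivAt (fun p : ℝ × ℝ => f p.1 p.2)
      (fderiv ℝ (fun p : ℝ × ℝ => f p.1 p.2) (a, b)) (a, b) :=
  ((hf.differentiable (by simp)) (a, b)).hasFDerivAt

lemma Smooth2.d1_eq {f : ℝ → ℝ → ℝ} (hf : Smooth2 f) (a b : ℝ) :
    d1 f a b = fderiv ℝ (fun p : ℝ × ℝ => f p.1 p.2) (a, b) (1, 0) :=
  ((hf.hasF a b).comp_hasDerivAt (f := fun a' : ℝ => (a', b)) a
    ((hasDerivAt_id a).prodMk (hasDerivAt_const a b))).deriv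

lemma Smooth2.d2_eq {f : ℝ → ℝ → ℝ} (hf : Smooth2 f) (a b : ℝ) :
    d2 f a b = fderiv ℝ (fun p : ℝ × ℝ => f p.1 p.2) (a, b) (0, 1) :=
  ((hf.hasF a b).comp_hasDerivAt (f := fun b' : ℝ => (a, b')) b
    ((hasDerivAt_const b a).prodMk (hasDerivAt_id b))).deriv

lemma Smooth2.d1 {f : ℝ → ℝ → ℝ} (hf : Smooth2 f) : Smooth2 (d1 f) := by
  have h : ContDiff ℝ (⊤ : ℕ∞) (fderiv ℝ (fun p : ℝ × ℝ => f p.1 p.2)) :=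
    ContDiff.fderiv_right hf (by simp)
  have h2 : ContDiff ℝ (⊤ : ℕ∞)
      (fun p : ℝ × ℝ => fderiv ℝ (fun p : ℝ × ℝ => f p.1 p.2) p (1, 0)) :=
    h.clm_apply contDiff_const
  have e : (fun p : ℝ × ℝ => _root_.d1 f p.1 p.2) =
      (fun p : ℝ × ℝ => fderiv ℝ (fun p : ℝ × ℝ => f p.1 p.2) p (1, 0)) := by
    funext p
    exact hf.d1_eq p.1 p.2
  unfold Smooth2
  rw [e]
  exact h2

lemma Smooth2.chain1 {G y : ℝ → ℝ → ℝ} (hG : Smooth2 G) (hy : Smooth2 y) (z τ : ℝ) :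
    HasDerivAt (fun z' => G (y z' τ) τ) (_root_.d1 G (y z τ) τ * _root_.d1 y z τ) z :=
  HasDerivAt.comp (h₂ := fun a => G a τ) (h := fun z' => y z' τ) z
    (hG.hasD1 (y z τ) τ) (hy.hasD1 z τ)

lemma Smooth2.hasD2 {f : ℝ → ℝ → ℝ} (hf : Smooth2 f) (a b : ℝ) :
    HasDerivAt (fun b' => f a b') (d2 f a b) b := by
  have h : Differentiable ℝ (fun p : ℝ × ℝ => f p.1 p.2) := hf.differentiable (by simp)
  have h2 : Differentiable ℝ (fun b' : ℝ => f a b') :=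
    h.comp (g := fun p : ℝ × ℝ => f p.1 p.2) (f := fun b' : ℝ => (a, b')) (by fun_prop)
  exact (h2 b).hasDerivAt

lemma Smooth2.chain2 {G y : ℝ → ℝ → ℝ} (hG : Smooth2 G) (hy : Smooth2 y) (z τ : ℝ) :
    HasDerivAt (fun τ' => G (y z τ') τ')
      (_root_.d1 G (y z τ) τ * d2 y z τ + d2 G (y z τ) τ) τ := by
  have h := (hG.hasF (y z τ) τ).comp_hasDerivAt (f := fun t : ℝ => (y z t, t)) τ
    ((hy.hasD2 z τ).prodMk (hasDerivAt_id τ))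
  have e : fderiv ℝ (fun p : ℝ × ℝ => G p.1 p.2) (y z τ, τ) (d2 y z τ, 1) =
      _root_.d1 G (y z τ) τ * d2 y z τ + d2 G (y z τ) τ := by
    rw [hG.d1_eq, hG.d2_eq]
    have : ((d2 y z τ, 1) : ℝ × ℝ) = d2 y z τ • ((1, 0) : ℝ × ℝ) + (0, 1) := by
      ext <;> simp
    rw [this, map_add, map_smul, smul_eq_mul, mul_comm]
  rw [← e]
  exact h

lemma final_neg {a b c d my myy fy fyy ft pzz p1 p2 l : ℝ} (hu : a ≠ 0)
    (hw : a + -1 * b ≠ 0)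
    (m1 : my * (a + -1 * b) = b * (a + -1 * b) + a * (b + -1 * c))
    (m2 : (myy * (a + -1 * b)) * (a + -1 * b) + my * (b + -1 * c)
      = (c * (a + -1 * b) + b * (b + -1 * c)) + (b * (b + -1 * c) + a * (c + -1 * d)))
    (h1 : fy * (a + -1 * b) = -p1 + (l / a) * p2)
    (h2 : (fyy * (a + -1 * b)) * (a + -1 * b) + fy * (b + -1 * c) = pzz)
    (ht : fy * ((a ^ 4 - a ^ 3 * c) + -1 * (4 * a ^ 3 * b - (3 * a ^ 2 * b * c + a ^ 3 * d)))
      + ft = l * (4 * l * a * p1 + (a * c + b ^ 2 - 2 * a * b - 4 * l ^ 2) * p2))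
    (q : b * (-p1 + (l / a) * p2) + a * pzz = -(b * p1 + a * (-p1 + (l / a) * p2)) + l * ((l / a) * p1 + p2)) :
    fyy = -(my / (a * (a + -1 * b))) * fy
        + ((a * (a + -1 * b) - (-l ^ 2)) / (a * (a + -1 * b)) ^ 2) * p1
    ∧ ft = ((a * (a + -1 * b)) ^ 2 * myy + a * (a + -1 * b) * my ^ 2
        - (a * (a + -1 * b)) ^ 2 + 4 * (-l ^ 2) * (a * (a + -1 * b))) * fy
        - a * (a + -1 * b) * my * p1 := by
  obtain ⟨w, hwd⟩ : ∃ w, w = a + -1 * b := ⟨_, rfl⟩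
  rw [← hwd] at hw m1 m2 h1 h2 ⊢
  have e1 : my = (b * w + a * (b + -1 * c)) / w := by field_simp; linarith
  have e2 : myy = (((c * w + b * (b + -1 * c)) + (b * (b + -1 * c) + a * (c + -1 * d)))
      - my * (b + -1 * c)) / w ^ 2 := by field_simp; linarith
  have e3 : fy = (-p1 + (l / a) * p2) / w := by field_simp; field_simp at h1; linarith
  have e4 : pzz = ( -(b * p1 + a * (-p1 + (l / a) * p2)) + l * ((l / a) * p1 + p2) - b * (-p1 + (l / a) * p2)) / a := by
    rw [eq_div_iff hu]; linarith
  have e5 : fyy = (pzz - fy * (b + -1 * c)) / w ^ 2 := by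
    rw [eq_div_iff (pow_ne_zero 2 hw)]; linarith
  have e6 : ft = l * (4 * l * a * p1 + (a * c + b ^ 2 - 2 * a * b - 4 * l ^ 2) * p2) - fy * ((a ^ 4 - a ^ 3 * c)
      + -1 * (4 * a ^ 3 * b - (3 * a ^ 2 * b * c + a ^ 3 * d))) := by linarith
  constructor
  · rw [e5, e4, e1, e3]
    field_simp
    rw [hwd]
    ring
  · rw [e6, e2, e1, e3]
    field_simp
    rw [hwd]
    ring

lemma final_pos {a b c d my myy fy fyy ft pzz p1 p2 l : ℝ} (hu : a ≠ 0)
    (hw : a + 1 * b ≠ 0)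
    (m1 : my * (a + 1 * b) = b * (a + 1 * b) + a * (b + 1 * c))
    (m2 : (myy * (a + 1 * b)) * (a + 1 * b) + my * (b + 1 * c)
      = (c * (a + 1 * b) + b * (b + 1 * c)) + (b * (b + 1 * c) + a * (c + 1 * d)))
    (h1 : fy * (a + 1 * b) = (l / a) * p1 + p2)
    (h2 : (fyy * (a + 1 * b)) * (a + 1 * b) + fy * (b + 1 * c) = pzz)
    (ht : fy * ((a ^ 4 - a ^ 3 * c) + 1 * (4 * a ^ 3 * b - (3 * a ^ 2 * b * c + a ^ 3 * d)))
      + ft = l * ((a * c + b ^ 2 + 2 * a * b - 4 * l ^ 2) * p1 - 4 * l * a * p2))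
    (q : b * ((l / a) * p1 + p2) + a * pzz = l * (-p1 + (l / a) * p2) + (b * p2 + a * ((l / a) * p1 + p2))) :
    fyy = -(my / (a * (a + 1 * b))) * fy
        + ((a * (a + 1 * b) - (-l ^ 2)) / (a * (a + 1 * b)) ^ 2) * p2
    ∧ ft = ((a * (a + 1 * b)) ^ 2 * myy + a * (a + 1 * b) * my ^ 2
        - (a * (a + 1 * b)) ^ 2 + 4 * (-l ^ 2) * (a * (a + 1 * b))) * fy
        - a * (a + 1 * b) * my * p2 := by
  obtain ⟨w, hwd⟩ : ∃ w, w = a + 1 * b := ⟨_, rfl⟩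
  rw [← hwd] at hw m1 m2 h1 h2 ⊢
  have e1 : my = (b * w + a * (b + 1 * c)) / w := by field_simp; linarith
  have e2 : myy = (((c * w + b * (b + 1 * c)) + (b * (b + 1 * c) + a * (c + 1 * d)))
      - my * (b + 1 * c)) / w ^ 2 := by field_simp; linarith
  have e3 : fy = ((l / a) * p1 + p2) / w := by field_simp; field_simp at h1; linarith
  have e4 : pzz = ( l * (-p1 + (l / a) * p2) + (b * p2 + a * ((l / a) * p1 + p2)) - b * ((l / a) * p1 + p2)) / a := by
    rw [eq_div_iff hu]; linarith
  have e5 : fyy = (pzz - fy * (b + 1 * c)) / w ^ 2 := by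
    rw [eq_div_iff (pow_ne_zero 2 hw)]; linarith
  have e6 : ft = l * ((a * c + b ^ 2 + 2 * a * b - 4 * l ^ 2) * p1 - 4 * l * a * p2) - fy * ((a ^ 4 - a ^ 3 * c)
      + 1 * (4 * a ^ 3 * b - (3 * a ^ 2 * b * c + a ^ 3 * d))) := by linarith
  constructor
  · rw [e5, e4, e1, e3]
    field_simp
    rw [hwd]
    ring
  · rw [e6, e2, e1, e3]
    field_simp
    rw [hwd]
    ring

/-- Corollary 1 of the paper: each component `Ψᵢ` of the RmKdV
eigenvector, expressed in the Miura-reciprocal variables (with `k = −1` for `i = 1`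
and `k = +1` for `i = 2`), satisfies the scalar RKdV Lax pair with `λ = −Λ²`. -/
theorem RmKdV_eigenvector_satisfies_RKdV_scalar_LaxPair
    (U Ψ₁ Ψ₂ Ψ y M Φ : ℝ → ℝ → ℝ) (Λ k : ℝ)
    (hU : Smooth2 U) (hΨ₁ : Smooth2 Ψ₁) (hΨ₂ : Smooth2 Ψ₂)
    (hy : Smooth2 y) (hM : Smooth2 M) (hΦ : Smooth2 Φ)
    (hUne : ∀ z τ, U z τ ≠ 0)
    (hRmKdV : ∀ z τ, d2 U z τ
      + d1 (fun z τ => (U z τ) ^ 3 * (d1 (d1 U) z τ - U z τ)) z τ = 0)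
    -- RmKdV Lax pair  Ψ_z = B·Ψ,  Ψ_τ = Λ·C·Ψ :
    (hz1 : ∀ z τ, d1 Ψ₁ z τ = -(Ψ₁ z τ) + (Λ / U z τ) * Ψ₂ z τ)
    (hz2 : ∀ z τ, d1 Ψ₂ z τ = (Λ / U z τ) * Ψ₁ z τ + Ψ₂ z τ)
    (hτ1 : ∀ z τ, d2 Ψ₁ z τ = Λ * (4 * Λ * U z τ * Ψ₁ z τ
      + (U z τ * d1 (d1 U) z τ + (d1 U z τ) ^ 2 - 2 * U z τ * d1 U z τ - 4 * Λ ^ 2)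
        * Ψ₂ z τ))
    (hτ2 : ∀ z τ, d2 Ψ₂ z τ = Λ *
      ((U z τ * d1 (d1 U) z τ + (d1 U z τ) ^ 2 + 2 * U z τ * d1 U z τ - 4 * Λ ^ 2)
        * Ψ₁ z τ - 4 * Λ * U z τ * Ψ₂ z τ))
    -- choice of component: k = −1 for Ψ₁, k = +1 for Ψ₂ :
    (hik : (k = -1 ∧ Ψ = Ψ₁) ∨ (k = 1 ∧ Ψ = Ψ₂))
    (hUkne : ∀ z τ, U z τ + k * d1 U z τ ≠ 0)
    -- Miura-reciprocal transformation :
    (hyz : ∀ z τ, d1 y z τ = U z τ + k * d1 U z τ)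
    (hyτ : ∀ z τ, d2 y z τ =
      ((U z τ) ^ 4 - (U z τ) ^ 3 * d1 (d1 U) z τ)
        + k * d1 (fun a b => (U a b) ^ 4 - (U a b) ^ 3 * d1 (d1 U) a b) z τ)
    (hMU : ∀ z τ, M (y z τ) τ = U z τ * (U z τ + k * d1 U z τ))
    (hΦΨ : ∀ z τ, Φ (y z τ) τ = Ψ z τ) :
    ∀ z τ,
      d1 (d1 Φ) (y z τ) τ =
          -(d1 M (y z τ) τ / M (y z τ) τ) * d1 Φ (y z τ) τ
            + ((M (y z τ) τ - (-Λ ^ 2)) / (M (y z τ) τ) ^ 2) * Φ (y z τ) τ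
      ∧ d2 Φ (y z τ) τ =
          ((M (y z τ) τ) ^ 2 * d1 (d1 M) (y z τ) τ
              + M (y z τ) τ * (d1 M (y z τ) τ) ^ 2
              - (M (y z τ) τ) ^ 2 + 4 * (-Λ ^ 2) * M (y z τ) τ) * d1 Φ (y z τ) τ
            - M (y z τ) τ * d1 M (y z τ) τ * Φ (y z τ) τ := by
  intro z τ
  have hU1 := hU.d1
  have hU2 := hU1.d1
  -- first derivative of M along z
  have m1 : ∀ z, d1 M (y z τ) τ * (U z τ + k * d1 U z τ)
      = d1 U z τ * (U z τ + k * d1 U z τ) + U z τ * (d1 U z τ + k * d1 (d1 U) z τ) := by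
    intro z
    have h1 := hM.chain1 hy z τ
    rw [hyz] at h1
    have h2 := (hU.hasD1 z τ).mul ((hU.hasD1 z τ).add ((hU1.hasD1 z τ).const_mul k))
    refine h1.unique (h2.congr_of_eventuallyEq (Filter.Eventually.of_forall ?_))
    intro z'
    exact hMU z' τ
  have m2 : (d1 (d1 M) (y z τ) τ * (U z τ + k * d1 U z τ)) * (U z τ + k * d1 U z τ)
        + d1 M (y z τ) τ * (d1 U z τ + k * d1 (d1 U) z τ)
      = (d1 (d1 U) z τ * (U z τ + k * d1 U z τ) + d1 U z τ * (d1 U z τ + k * d1 (d1 U) z τ))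
        + (d1 U z τ * (d1 U z τ + k * d1 (d1 U) z τ)
          + U z τ * (d1 (d1 U) z τ + k * d1 (d1 (d1 U)) z τ)) := by
    have h1 := hM.d1.chain1 hy z τ
    rw [hyz] at h1
    have hw := (hU.hasD1 z τ).add ((hU1.hasD1 z τ).const_mul k)
    have hw1 := (hU1.hasD1 z τ).add ((hU2.hasD1 z τ).const_mul k)
    have h2 := h1.mul hw
    have h3 := ((hU1.hasD1 z τ).mul hw).add ((hU.hasD1 z τ).mul hw1)
    refine h2.unique (h3.congr_of_eventuallyEq (Filter.Eventually.of_forall ?_))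
    intro z'
    exact m1 z'
  have eF : d1 (fun a b => (U a b) ^ 4 - (U a b) ^ 3 * d1 (d1 U) a b) z τ
      = 4 * U z τ ^ 3 * d1 U z τ - (3 * U z τ ^ 2 * d1 U z τ * d1 (d1 U) z τ
        + U z τ ^ 3 * d1 (d1 (d1 U)) z τ) := by
    have h := ((hU.hasD1 z τ).pow 4).sub (((hU.hasD1 z τ).pow 3).mul (hU2.hasD1 z τ))
    refine (h.deriv).trans ?_
    simp
  have hYt := hyτ z τ
  rw [eF] at hYt
  have hΨs : Smooth2 Ψ := by
    rcases hik with ⟨_, h⟩ | ⟨_, h⟩ <;> rw [h] <;> assumption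
  have p1 : ∀ z, d1 Φ (y z τ) τ * (U z τ + k * d1 U z τ) = d1 Ψ z τ := by
    intro z
    have h1 := hΦ.chain1 hy z τ
    rw [hyz] at h1
    refine h1.unique ((hΨs.hasD1 z τ).congr_of_eventuallyEq (Filter.Eventually.of_forall ?_))
    intro z'
    exact hΦΨ z' τ
  have p2 : (d1 (d1 Φ) (y z τ) τ * (U z τ + k * d1 U z τ)) * (U z τ + k * d1 U z τ)
        + d1 Φ (y z τ) τ * (d1 U z τ + k * d1 (d1 U) z τ) = d1 (d1 Ψ) z τ := by
    have h1 := hΦ.d1.chain1 hy z τ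
    rw [hyz] at h1
    have hw := (hU.hasD1 z τ).add ((hU1.hasD1 z τ).const_mul k)
    refine (h1.mul hw).unique ((hΨs.d1.hasD1 z τ).congr_of_eventuallyEq
      (Filter.Eventually.of_forall ?_))
    intro z'
    exact p1 z'
  have pt : d1 Φ (y z τ) τ * d2 y z τ + d2 Φ (y z τ) τ = d2 Ψ z τ := by
    refine (hΦ.chain2 hy z τ).unique ((hΨs.hasD2 z τ).congr_of_eventuallyEq
      (Filter.Eventually.of_forall ?_))
    intro t
    exact hΦΨ z t
  -- second z-derivatives of the eigenvector components
  have q1 : d1 U z τ * d1 Ψ₁ z τ + U z τ * d1 (d1 Ψ₁) z τ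
      = -(d1 U z τ * Ψ₁ z τ + U z τ * d1 Ψ₁ z τ) + Λ * d1 Ψ₂ z τ := by
    have h1 := (hU.hasD1 z τ).mul (hΨ₁.d1.hasD1 z τ)
    have h2 := ((hU.hasD1 z τ).mul (hΨ₁.hasD1 z τ)).neg.add ((hΨ₂.hasD1 z τ).const_mul Λ)
    refine h1.unique (h2.congr_of_eventuallyEq (Filter.Eventually.of_forall ?_))
    intro z'
    have := hUne z' τ
    simp only [Pi.mul_apply, Pi.add_apply, Pi.neg_apply, hz1]
    field_simp
  have q2 : d1 U z τ * d1 Ψ₂ z τ + U z τ * d1 (d1 Ψ₂) z τ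
      = Λ * d1 Ψ₁ z τ + (d1 U z τ * Ψ₂ z τ + U z τ * d1 Ψ₂ z τ) := by
    have h1 := (hU.hasD1 z τ).mul (hΨ₂.d1.hasD1 z τ)
    have h2 := ((hΨ₁.hasD1 z τ).const_mul Λ).add ((hU.hasD1 z τ).mul (hΨ₂.hasD1 z τ))
    refine h1.unique (h2.congr_of_eventuallyEq (Filter.Eventually.of_forall ?_))
    intro z'
    have := hUne z' τ
    simp only [Pi.mul_apply, Pi.add_apply, hz2]
    field_simp
  have m1 := m1 z
  have p1 := p1 z
  have hu := hUne z τ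
  have hw := hUkne z τ
  have a1 := hz1 z τ
  have a2 := hz2 z τ
  have b1 := hτ1 z τ
  have b2 := hτ2 z τ
  rw [hMU, hΦΨ]
  rcases hik with ⟨rfl, rfl⟩ | ⟨rfl, rfl⟩
  · rw [hYt, b1] at pt
    rw [a1] at p1 q1
    rw [a2] at q1
    exact final_neg hu hw m1 m2 p1 p2 pt q1
  · rw [hYt, b2] at pt
    rw [a2] at p1 q2
    rw [a1] at q2
    exact final_pos hu hw m1 m2 p1 p2 pt q2
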